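/- Let n ≥ 1 be an integer and let a, b > 0 be real numbers. Let (Λ_k)_{k≥1} be a nondecreasing sequence of positive real numbers such that for every integer m ≥ 1 one has ∑_{k=1}^m Λ_k ≥ a·m^{(n+2)/n} + b·m. Define the doubled sequence (λ_j)_{j≥1} by λ_{2k−1} = λ_{2k} = Λ_k for every k ≥ 1. Then for every integer m ≥ 1, ∑_{j=1}^m λ_j ≥ 2^{−2/n}·a·m^{(n+2)/n} + b·m. -/

import Mathlib

/-- If the partial sums of a nondecreasing positive sequence `Λ`
(0-indexed, so `Λ k` is the `(k+1)`-st term) satisfy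
`∑_{k=1}^m Λ_k ≥ a·m^{(n+2)/n} + b·m`, then the doubled sequence `lam`
(with `lam (2k) = lam (2k+1) = Λ k`, i.e. `λ_{2k-1} = λ_{2k} = Λ_k` in 1-indexed
notation) satisfies `∑_{j=1}^m λ_j ≥ 2^{-2/n}·a·m^{(n+2)/n} + b·m`. -/
theorem stmt_0 (n : ℕ) (hn : 1 ≤ n) (a b : ℝ) (ha : 0 < a) (hb : 0 < b)
    (Λ : ℕ → ℝ) (hΛpos : ∀ k, 0 < Λ k) (hΛmono : Monotone Λ)
    (hΛsum : ∀ m : ℕ, 1 ≤ m →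
      (∑ k ∈ Finset.range m, Λ k) ≥
        a * (m : ℝ) ^ (((n : ℝ) + 2) / n) + b * m)
    (lam : ℕ → ℝ)
    (hlam : ∀ k : ℕ, lam (2 * k) = Λ k ∧ lam (2 * k + 1) = Λ k) :
    ∀ m : ℕ, 1 ≤ m →
      (∑ j ∈ Finset.range m, lam j) ≥
        (2 : ℝ) ^ (-(2 : ℝ) / n) * a * (m : ℝ) ^ (((n : ℝ) + 2) / n) + b * m := by
  have hn0 : (0 : ℝ) < n := by exact_mod_cast hn
  have hp1 : (1 : ℝ) ≤ ((n : ℝ) + 2) / n := by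
    rw [le_div_iff₀ hn0]; linarith
  have hp2 : -(2 : ℝ) / n = 1 - ((n : ℝ) + 2) / n := by
    field_simp; ring
  rw [hp2]
  set p : ℝ := ((n : ℝ) + 2) / n with hp
  have hS : ∀ m : ℕ, (∑ k ∈ Finset.range m, Λ k) ≥ a * (m : ℝ) ^ p + b * m := by
    intro m
    rcases Nat.eq_zero_or_pos m with rfl | hm
    · have : p ≠ 0 := by linarith
      simp [Real.zero_rpow this]
    · exact hΛsum m hm
  have hconv : ∀ u v : ℝ, 0 ≤ u → 0 ≤ v →
      (2 : ℝ) ^ (1 - p) * (u + v) ^ p ≤ u ^ p + v ^ p := by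
    intro u v hu hv
    have h := (convexOn_rpow hp1).2 (Set.mem_Ici.2 hu) (Set.mem_Ici.2 hv)
      (by norm_num : (0 : ℝ) ≤ 1 / 2) (by norm_num : (0 : ℝ) ≤ 1 / 2) (by norm_num)
    simp only [smul_eq_mul] at h
    have e : 1 / 2 * u + 1 / 2 * v = (u + v) / 2 := by ring
    rw [e, Real.div_rpow (by positivity) (by norm_num)] at h
    rw [Real.rpow_sub (by norm_num), Real.rpow_one]
    have e2 : (2 : ℝ) / 2 ^ p * (u + v) ^ p = 2 * ((u + v) ^ p / 2 ^ p) := by ring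
    rw [e2]; linarith
  have heven : ∀ k : ℕ, ∑ j ∈ Finset.range (2 * k), lam j = 2 * ∑ j ∈ Finset.range k, Λ j := by
    intro k
    induction k with
    | zero => simp
    | succ k ih =>
      rw [show 2 * (k + 1) = 2 * k + 1 + 1 by ring, Finset.sum_range_succ,
        Finset.sum_range_succ, ih, Finset.sum_range_succ, (hlam k).1, (hlam k).2]
      ring
  intro m _
  have key : ∃ u v : ℕ, u + v = m ∧ ∑ j ∈ Finset.range m, lam j =
      ∑ j ∈ Finset.range u, Λ j + ∑ j ∈ Finset.range v, Λ j := by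
    rcases Nat.even_or_odd' m with ⟨k, rfl | rfl⟩
    · exact ⟨k, k, by ring, by rw [heven]; ring⟩
    · refine ⟨k, k + 1, by ring, ?_⟩
      rw [Finset.sum_range_succ, heven, (hlam k).1, Finset.sum_range_succ]; ring
  obtain ⟨u, v, rfl, h⟩ := key
  rw [h]
  have hc := mul_le_mul_of_nonneg_left (hconv u v (by positivity) (by positivity)) ha.le
  have h1 := hS u
  have h2 := hS v
  push_cast
  linarith
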